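/- A ring R is quasi-Frobenius if and only if R is right noetherian, left 2-injective, and every nonzero complement left ideal of R is not small. -/

import Mathlib

open MulOpposite in
/-- Right ideals of `R`, as submodules of `R` over `Rᵐᵒᵖ`. -/
abbrev RIdeal (R : Type*) [Ring R] := Submodule Rᵐᵒᵖ R

section Defs
variable (R : Type*) [Ring R]

/-- Left annihilator of a subset. -/
def lAnn (X : Set R) : Set R := {a | ∀ x ∈ X, a * x = 0}

/-- Right annihilator of a subset. -/
def rAnn (X : Set R) : Set R := {a | ∀ x ∈ X, x * a = 0}

/-- Right annihilator of a subset, as a right ideal. -/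
def rAnnI (X : Set R) : RIdeal R where
  carrier := rAnn R X
  add_mem' := by intro a b ha hb x hx; rw [mul_add, ha x hx, hb x hx, add_zero]
  zero_mem' := by intro x hx; rw [mul_zero]
  smul_mem' := by
    intro c a ha x hx
    show x * (a * c.unop) = 0
    rw [← mul_assoc, ha x hx, zero_mul]

/-- `R` is left P-injective: `rl(a) = aR` for every `a`. -/
def IsLeftPInjective : Prop :=
  ∀ a x : R, (∀ u : R, u * a = 0 → u * x = 0) ↔ ∃ s : R, x = a * s

/-- `R` is left 2-injective. -/
def IsLeft2Injective : Prop :=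
  ∀ (a b : R) (f : ↥(Submodule.span R ({a, b} : Set R)) →ₗ[R] R),
    ∃ g : R →ₗ[R] R, ∀ x : ↥(Submodule.span R ({a, b} : Set R)), g (x : R) = f x

/-- `R` is left FP-injective: every matrix ring over `R` is left P-injective. -/
def IsLeftFPInjective : Prop :=
  ∀ n : ℕ, IsLeftPInjective (Matrix (Fin n) (Fin n) R)

/-- A left ideal is small if `K + I = R` implies `K = R`. -/
def IsSmallLeftIdeal (I : Ideal R) : Prop := ∀ K : Ideal R, K ⊔ I = ⊤ → K = ⊤

/-- A complement left ideal: maximal with respect to intersecting some left ideal trivially. -/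
def IsComplementLeftIdeal (C : Ideal R) : Prop :=
  ∃ S : Ideal R, C ⊓ S = ⊥ ∧ ∀ C' : Ideal R, C ≤ C' → C' ⊓ S = ⊥ → C' = C

/-- A right ideal is essential in `R`. -/
def IsEssentialRIdeal (I : RIdeal R) : Prop := ∀ K : RIdeal R, K ⊓ I = ⊥ → K = ⊥

/-- The right socle: the sum of all simple (minimal) right ideals. -/
def rSocle : RIdeal R := sSup {m : RIdeal R | IsSimpleModule Rᵐᵒᵖ m}

/-- The right singular ideal. -/
def rSingular : Set R := {a | IsEssentialRIdeal R (rAnnI R {a})}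

/-- ACC on right annihilators. -/
def ACCOnRightAnnihilators : Prop :=
  ∀ f : ℕ → Set R, (∀ n, ∃ X : Set R, f n = rAnn R X) → (∀ n, f n ⊆ f (n + 1)) →
    ∃ n, ∀ m, n ≤ m → f m = f n

/-- The Jacobson radical, as a set. -/
def jacobsonSet : Set R := (TwoSidedIdeal.jacobson (⊥ : TwoSidedIdeal R) : Set R)

/-- A subset is nilpotent if products of some fixed length of its elements vanish. -/
def IsNilpotentSet (J : Set R) : Prop :=
  ∃ n : ℕ, ∀ f : Fin (n + 1) → R, (∀ i, f i ∈ J) → (List.ofFn f).prod = 0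

/-- `R` is quasi-Frobenius: left noetherian and left self-injective. -/
def IsQuasiFrobenius : Prop := IsNoetherianRing R ∧ Module.Injective R R

/-- `R` is right mininjective. -/
def IsRightMininjective : Prop :=
  ∀ (I : RIdeal R), IsSimpleModule Rᵐᵒᵖ I → ∀ f : I →ₗ[Rᵐᵒᵖ] R,
    ∃ c : R, ∀ x : I, f x = c * (x : R)

/-- `R` is left mininjective. -/
def IsLeftMininjective : Prop :=
  ∀ (I : Ideal R), IsSimpleModule R I → ∀ f : I →ₗ[R] R,
    ∃ c : R, ∀ x : I, f x = (x : R) * c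

/-- `R` is right simple injective. -/
def IsRightSimpleInjective : Prop :=
  ∀ (I : RIdeal R) (f : I →ₗ[Rᵐᵒᵖ] R), IsSimpleModule Rᵐᵒᵖ (LinearMap.range f) →
    ∃ c : R, ∀ x : I, f x = c * (x : R)

/-- `R` is left CS: every left ideal is essential in a direct summand of `R`. -/
def IsLeftCS : Prop :=
  ∀ I : Ideal R, ∃ K : Ideal R, (∃ K' : Ideal R, IsCompl K K') ∧ I ≤ K ∧
    ∀ L : Ideal R, L ≤ K → L ⊓ I = ⊥ → L = ⊥

/-- `R` is left min-CS: every minimal left ideal is essential in a direct summand. -/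
def IsLeftMinCS : Prop :=
  ∀ I : Ideal R, IsSimpleModule R I → ∃ K : Ideal R, (∃ K' : Ideal R, IsCompl K K') ∧ I ≤ K ∧
    ∀ L : Ideal R, L ≤ K → L ⊓ I = ⊥ → L = ⊥

/-- `R` is right Johns: right noetherian and every right ideal is a right annihilator. -/
def IsRightJohns : Prop :=
  IsNoetherianRing Rᵐᵒᵖ ∧ ∀ I : RIdeal R, ∃ X : Set R, (I : Set R) = rAnn R X

end Defs

section MoreDefs
variable (R : Type*) [Ring R]

/-- Left annihilator of a subset, as a left ideal. -/
def lAnnI (X : Set R) : Ideal R where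
  carrier := lAnn R X
  add_mem' := by intro a b ha hb x hx; rw [add_mul, ha x hx, hb x hx, add_zero]
  zero_mem' := by intro x hx; rw [zero_mul]
  smul_mem' := by
    intro c a ha x hx
    show c * a * x = 0
    rw [mul_assoc, ha x hx, mul_zero]

/-- A left ideal is essential in `R`. -/
def IsEssentialLIdeal (I : Ideal R) : Prop := ∀ K : Ideal R, K ⊓ I = ⊥ → K = ⊥

/-- The left singular ideal `Z_l`. -/
def lSingular : Set R := {a | IsEssentialLIdeal R (lAnnI R {a})}

end MoreDefs

/-!
Write `J` for the Jacobson radical. In a left P-injective ring `J` is the left singular ideal, so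
`a ∉ J` gives a nonzero complement left ideal `D` on which right multiplication by `a` is injective,
and P-injectivity solves `d * a * s = d` for every `d ∈ D`. If `D` is not contained in `J`, as
happens when `D` is not small, then `a` acts nontrivially on an element outside `J`; with a chain
condition on either side this forces `R ⧸ J` to be semisimple. The chain condition also makes `J`
nilpotent, so `R` is semiprimary, and noetherian upgrades to finite length on that side.

For a right noetherian `R`, the idempotents lifted from `R ⧸ J` show that every simple left module
embeds in `R`; together with 2-injectivity this yields the double annihilator condition for
principal left ideals as well. The functor `Hom(-, R)` then does not increase length on either
side, hence `R` has the same length on both sides, and the exact sequence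
`0 → Hom(R ⧸ I, R) → Hom(R, R) → Hom(I, R)` has a surjective last map by counting lengths: `R` is
left self-injective.

Conversely, over a left self-injective ring a complement left ideal is generated by an idempotent,
so it is not small unless it is zero, and the length comparison carries left artinian to right
noetherian.
-/

section Radical

variable {R : Type*} [Ring R]

theorem isUnit_one_sub_mul_comm {a b : R} : IsUnit (1 - a * b) ↔ IsUnit (1 - b * a) := by
  have h := spectrum.unit_mem_mul_comm (R := ℤ) (a := a) (b := b) (r := 1)
  simpa [spectrum.mem_iff, not_iff_not] using h

theorem mem_jacobson_iff_exists_mul_one_sub {x : R} :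
    x ∈ Ring.jacobson R ↔ ∀ y, ∃ z, z * (1 - y * x) = 1 := by
  rw [← Ideal.jacobson_bot, Ideal.mem_jacobson_iff, (Equiv.neg R).forall_congr_left]
  simp only [Ideal.mem_bot, sub_eq_zero, mul_sub, mul_one, Equiv.neg_symm, Equiv.neg_apply,
    mul_neg, neg_mul, neg_add_eq_sub, mul_assoc]

theorem mem_jacobson_iff_isUnit_one_sub_mul_left {x : R} :
    x ∈ Ring.jacobson R ↔ ∀ y, IsUnit (1 - y * x) := by
  rw [mem_jacobson_iff_exists_mul_one_sub]
  refine ⟨fun h y ↦ ?_, fun h y ↦ (h y).exists_left_inv⟩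
  obtain ⟨z, hz⟩ := h y
  obtain ⟨w, hw⟩ := h (-(z * y))
  have hz' : 1 - -(z * y) * x = z := by
    rw [← hz]
    noncomm_ring
  rw [hz'] at hw
  exact ⟨⟨1 - y * x, z, by rwa [← left_inv_eq_right_inv hw hz], hz⟩, rfl⟩

theorem mem_jacobson_iff_isUnit_one_sub_mul_right {x : R} :
    x ∈ Ring.jacobson R ↔ ∀ y, IsUnit (1 - x * y) := by
  simp only [mem_jacobson_iff_isUnit_one_sub_mul_left, isUnit_one_sub_mul_comm]

theorem op_mem_jacobson_iff {x : R} :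
    MulOpposite.op x ∈ Ring.jacobson Rᵐᵒᵖ ↔ x ∈ Ring.jacobson R := by
  rw [mem_jacobson_iff_isUnit_one_sub_mul_left, mem_jacobson_iff_isUnit_one_sub_mul_right]
  simp [← MulOpposite.op_mul, ← MulOpposite.op_one, ← MulOpposite.op_sub]

theorem mem_jacobson_iff_exists_one_sub_mul {x : R} :
    x ∈ Ring.jacobson R ↔ ∀ y, ∃ z, (1 - x * y) * z = 1 := by
  rw [← op_mem_jacobson_iff, mem_jacobson_iff_exists_mul_one_sub]
  simp only [MulOpposite.op_surjective.forall, MulOpposite.op_surjective.exists,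
    ← MulOpposite.op_mul, ← MulOpposite.op_one, ← MulOpposite.op_sub, MulOpposite.op_inj]

theorem isSmallLeftIdeal_of_le_jacobson {I : Ideal R} (hI : I ≤ Ring.jacobson R) :
    IsSmallLeftIdeal R I := by
  intro K hK
  by_contra hne
  obtain ⟨M, hM, hKM⟩ := K.exists_le_maximal hne
  exact hM.ne_top (top_le_iff.1 (hK.ge.trans
    (sup_le hKM (hI.trans (Ring.jacobson_le_of_isMaximal M)))))

theorem not_isSmallLeftIdeal_of_isCompl {I K : Ideal R} (h : IsCompl I K) (hI : I ≠ ⊥) :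
    ¬ IsSmallLeftIdeal R I := by
  intro hsmall
  have hK : K = ⊤ := hsmall K h.symm.sup_eq_top
  exact hI (by rw [← h.inf_eq_bot, hK, inf_top_eq])

theorem mem_span_singleton_iff_mul_eq_self {e x : R} (he : IsIdempotentElem e) :
    x ∈ Ideal.span {e} ↔ x * e = x := by
  refine ⟨fun hx ↦ ?_, fun hx ↦ Ideal.mem_span_singleton'.2 ⟨x, hx⟩⟩
  obtain ⟨r, rfl⟩ := Ideal.mem_span_singleton'.1 hx
  rw [mul_assoc, he.eq]

theorem isCompl_span_singleton_one_sub {e : R} (he : IsIdempotentElem e) :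
    IsCompl (Ideal.span {e}) (Ideal.span {1 - e}) := by
  refine .of_eq ((Submodule.eq_bot_iff _).2 ?_) ?_
  · rintro x ⟨hxe, hx⟩
    rw [SetLike.mem_coe, mem_span_singleton_iff_mul_eq_self he] at hxe
    rw [SetLike.mem_coe, mem_span_singleton_iff_mul_eq_self he.one_sub, mul_sub, mul_one, hxe,
      sub_self] at hx
    exact hx.symm
  · rw [Ideal.eq_top_iff_one]
    simpa using Submodule.add_mem_sup (Ideal.mem_span_singleton_self e)
      (Ideal.mem_span_singleton_self (1 - e))

end Radical

section Essential

variable {R : Type*} [Ring R]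

theorem mem_lAnnI {X : Set R} {x : R} : x ∈ lAnnI R X ↔ ∀ a ∈ X, x * a = 0 := Iff.rfl

theorem lAnnI_anti {X Y : Set R} (h : X ⊆ Y) : lAnnI R Y ≤ lAnnI R X :=
  fun _ hx a ha ↦ hx a (h ha)

theorem mem_lAnnI_singleton {a x : R} : x ∈ lAnnI R {a} ↔ x * a = 0 := by
  simp [mem_lAnnI]

theorem lAnnI_singleton_le_mul (a b : R) : lAnnI R {a} ≤ lAnnI R {a * b} := fun x hx ↦ by
  rw [mem_lAnnI_singleton] at hx ⊢
  rw [← mul_assoc, hx, zero_mul]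

theorem isEssentialLIdeal_iff {I : Ideal R} :
    IsEssentialLIdeal R I ↔ ∀ x ≠ 0, ∃ r, r * x ≠ 0 ∧ r * x ∈ I := by
  constructor
  · intro h x hx
    have hmeet : Ideal.span {x} ⊓ I ≠ ⊥ := fun hbot ↦
      hx (Ideal.span_singleton_eq_bot.1 (h _ hbot))
    obtain ⟨y, ⟨hyx, hyI⟩, hy0⟩ := Submodule.exists_mem_ne_zero_of_ne_bot hmeet
    obtain ⟨r, rfl⟩ := Ideal.mem_span_singleton'.1 hyx
    exact ⟨r, hy0, hyI⟩
  · intro h K hK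
    by_contra hne
    obtain ⟨x, hxK, hx0⟩ := Submodule.exists_mem_ne_zero_of_ne_bot hne
    obtain ⟨r, hr0, hrI⟩ := h x hx0
    exact hr0 ((Submodule.eq_bot_iff _).1 hK _ ⟨K.mul_mem_left r hxK, hrI⟩)

theorem isEssentialLIdeal_top : IsEssentialLIdeal R ⊤ := fun K hK ↦ by rwa [inf_top_eq] at hK

theorem IsEssentialLIdeal.mono {I K : Ideal R} (hI : IsEssentialLIdeal R I) (hIK : I ≤ K) :
    IsEssentialLIdeal R K := fun L hL ↦ hI L (le_bot_iff.1 (hL ▸ inf_le_inf_left L hIK))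

theorem IsEssentialLIdeal.inf {I K : Ideal R} (hI : IsEssentialLIdeal R I)
    (hK : IsEssentialLIdeal R K) : IsEssentialLIdeal R (I ⊓ K) := fun L hL ↦
  hI L (hK _ (by rwa [inf_assoc]))

theorem IsEssentialLIdeal.finset_inf {ι : Type*} (s : Finset ι) {I : ι → Ideal R}
    (hI : ∀ i ∈ s, IsEssentialLIdeal R (I i)) : IsEssentialLIdeal R (s.inf I) :=
  Finset.inf_induction isEssentialLIdeal_top (fun _ hI _ hK ↦ hI.inf hK) hI

theorem IsEssentialLIdeal.exists_mul_mem {I : Ideal R} (hI : IsEssentialLIdeal R I)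
    (s : Finset R) (hs : ∃ x ∈ s, x ≠ 0) :
    ∃ r, (∀ x ∈ s, r * x ∈ I) ∧ ∃ x ∈ s, r * x ≠ 0 := by
  classical
  induction s using Finset.induction_on with
  | empty => simp at hs
  | insert x s _ ih =>
    obtain ⟨r, hrI, hr⟩ : ∃ r, (∀ y ∈ s, r * y ∈ I) ∧ ∃ y ∈ insert x s, r * y ≠ 0 := by
      by_cases hs' : ∃ y ∈ s, y ≠ 0
      · obtain ⟨r, hrI, y, hy, hry⟩ := ih hs'
        exact ⟨r, hrI, y, Finset.mem_insert_of_mem hy, hry⟩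
      · push Not at hs'
        exact ⟨1, fun y hy ↦ by simp [hs' y hy], by simpa using hs⟩
    by_cases hrx : r * x = 0
    · exact ⟨r, by simpa [hrx] using hrI, hr⟩
    · obtain ⟨t, ht0, htI⟩ := isEssentialLIdeal_iff.1 hI _ hrx
      rw [← mul_assoc] at ht0
      refine ⟨t * r, ?_, x, Finset.mem_insert_self x s, ht0⟩
      simpa [mul_assoc] using And.intro htI fun y hy ↦ I.mul_mem_left t (hrI y hy)

theorem exists_maximal_inf_eq_bot {I L : Ideal R} (h : L ⊓ I = ⊥) :
    ∃ C, L ≤ C ∧ Maximal (fun C' : Ideal R ↦ C' ⊓ I = ⊥) C := by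
  refine zorn_le_nonempty₀ {C' : Ideal R | C' ⊓ I = ⊥} (fun c hc hchain _ _ ↦ ?_) L h
  refine ⟨sSup c, ?_, fun z ↦ le_sSup⟩
  rw [Set.mem_ofPred_eq, ← disjoint_iff, hchain.directedOn.disjoint_sSup_left]
  exact fun z hz ↦ disjoint_iff.2 (hc hz)

theorem isComplementLeftIdeal_iff {C : Ideal R} :
    IsComplementLeftIdeal R C ↔ ∃ I, Maximal (fun C' : Ideal R ↦ C' ⊓ I = ⊥) C := by
  refine exists_congr fun I ↦ and_congr_right fun _ ↦ forall_congr' fun C' ↦ ?_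
  exact ⟨fun h hI hle ↦ (h hle hI).le, fun h hle hI ↦ (h hI hle).antisymm hle⟩

theorem exists_isComplementLeftIdeal {I : Ideal R} (hI : ¬ IsEssentialLIdeal R I) :
    ∃ D : Ideal R, IsComplementLeftIdeal R D ∧ D ≠ ⊥ ∧ D ⊓ I = ⊥ := by
  simp only [IsEssentialLIdeal, not_forall] at hI
  obtain ⟨K, hK, hK0⟩ := hI
  obtain ⟨D, hKD, hD⟩ := exists_maximal_inf_eq_bot hK
  exact ⟨D, isComplementLeftIdeal_iff.2 ⟨I, hD⟩, ne_bot_of_le_ne_bot hK0 hKD, hD.prop⟩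

end Essential

section PInjective

variable {R : Type*} [Ring R]

theorem IsLeftPInjective.mem_lSingular_iff (hP : IsLeftPInjective R) {a : R} :
    a ∈ lSingular R ↔ a ∈ Ring.jacobson R := by
  constructor
  · intro ha
    refine mem_jacobson_iff_exists_one_sub_mul.2 fun y ↦ ?_
    obtain ⟨s, hs⟩ := (hP (1 - a * y) 1).1 fun u hu ↦ by
      by_contra hu0
      rw [mul_one] at hu0
      obtain ⟨r, hr0, hra⟩ := isEssentialLIdeal_iff.1 ha u hu0
      rw [mem_lAnnI_singleton] at hra
      have huy : u = u * a * y := by simpa [mul_sub, sub_eq_zero, mul_assoc] using hu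
      rw [huy, ← mul_assoc, ← mul_assoc, hra, zero_mul] at hr0
      exact hr0 rfl
    exact ⟨s, hs.symm⟩
  · intro ha
    refine isEssentialLIdeal_iff.2 fun x hx ↦ ?_
    by_contra! h
    simp only [mem_lAnnI_singleton] at h
    obtain ⟨s, hs⟩ := (hP (x * a) x).1 fun u hu ↦ by
      by_contra hux
      exact h u hux (by rw [mul_assoc, hu])
    have hunit := mem_jacobson_iff_isUnit_one_sub_mul_right.1 ha s
    refine hx (hunit.mul_left_eq_zero.1 ?_)
    rw [mul_sub, mul_one, ← mul_assoc, ← hs, sub_self]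

theorem IsLeftPInjective.exists_isComplementLeftIdeal (hP : IsLeftPInjective R) {a : R}
    (ha : a ∉ Ring.jacobson R) :
    ∃ D : Ideal R, IsComplementLeftIdeal R D ∧ D ≠ ⊥ ∧ ∀ d ∈ D, ∃ s, d * a * s = d := by
  rw [← hP.mem_lSingular_iff] at ha
  obtain ⟨D, hD, hD0, hDa⟩ := _root_.exists_isComplementLeftIdeal ha
  refine ⟨D, hD, hD0, fun d hd ↦ ?_⟩
  obtain ⟨s, hs⟩ := (hP (d * a) d).1 fun u hu ↦ by
    have hmem : u * d ∈ D ⊓ lAnnI R {a} :=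
      ⟨D.mul_mem_left u hd, mem_lAnnI_singleton.2 (by rw [mul_assoc, hu])⟩
    rwa [hDa, Submodule.mem_bot] at hmem
  exact ⟨s, hs.symm⟩

theorem exists_eq_mul_of_ker_le_ker {M : Type*} [AddCommGroup M] [Module R M] {g h : M →ₗ[R] R}
    (hext : ∀ f : LinearMap.range g →ₗ[R] R, ∃ f' : R →ₗ[R] R,
      ∀ x : LinearMap.range g, f' (x : R) = f x)
    (hle : LinearMap.ker g ≤ LinearMap.ker h) : ∃ c, ∀ m, h m = g m * c := by
  obtain ⟨f', hf'⟩ := hext ((LinearMap.ker g).liftQ h hle ∘ₗ g.quotKerEquivRange.symm)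
  refine ⟨f' 1, fun m ↦ ?_⟩
  calc h m = (LinearMap.ker g).liftQ h hle (g.quotKerEquivRange.symm ⟨g m, m, rfl⟩) := by
        rw [LinearMap.quotKerEquivRange_symm_apply_image g m ⟨m, rfl⟩, Submodule.mkQ_apply,
          Submodule.liftQ_apply]
    _ = f' (g m) := (hf' ⟨g m, m, rfl⟩).symm
    _ = g m * f' 1 := by rw [← smul_eq_mul, ← map_smul, smul_eq_mul, mul_one]

theorem IsLeft2Injective.exists_eq_mul (h2 : IsLeft2Injective R) {a b x y : R}
    (h : ∀ u v, u * a + v * b = 0 → u * x + v * y = 0) : ∃ c, x = a * c ∧ y = b * c := by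
  let φ (p q : R) : R × R →ₗ[R] R :=
    (LinearMap.toSpanSingleton R R p).coprod (LinearMap.toSpanSingleton R R q)
  have hrange : LinearMap.range (φ a b) = Submodule.span R {a, b} := by
    rw [LinearMap.range_coprod, Submodule.span_insert, LinearMap.range_toSpanSingleton,
      LinearMap.range_toSpanSingleton]
  obtain ⟨c, hc⟩ := exists_eq_mul_of_ker_le_ker (g := φ a b) (h := φ x y)
    (by rw [hrange]; exact h2 a b) (fun m ↦ by simpa [φ] using h m.1 m.2)
  exact ⟨c, by simpa [φ] using hc (1, 0), by simpa [φ] using hc (0, 1)⟩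

theorem IsLeft2Injective.isLeftPInjective (h2 : IsLeft2Injective R) : IsLeftPInjective R := by
  refine fun a x ↦ ⟨fun h ↦ ?_, ?_⟩
  · obtain ⟨c, hc, -⟩ := h2.exists_eq_mul (a := a) (b := 0) (x := x) (y := 0)
      (by simpa using h)
    exact ⟨c, hc⟩
  · rintro ⟨s, rfl⟩ u hu
    rw [← mul_assoc, hu, zero_mul]

end PInjective

section Nilpotent

variable {R : Type*} [Ring R]

theorem mem_lAnnI_mul {I K : Ideal R} {x : R} :
    x ∈ lAnnI R ((I * K : Ideal R) : Set R) ↔ ∀ a ∈ I, x * a ∈ lAnnI R (K : Set R) := by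
  simp only [mem_lAnnI, mul_assoc]
  refine ⟨fun h a ha b hb ↦ h _ (Submodule.mul_mem_mul ha hb), fun h c hc ↦ ?_⟩
  induction hc using Submodule.mul_induction_on' with
  | mem_mul_mem a ha b hb => exact h a ha b hb
  | add a _ b _ ha hb => rw [mul_add, ha, hb, add_zero]

theorem eq_zero_of_one_mem_lAnnI {I : Ideal R} (h : 1 ∈ lAnnI R (I : Set R)) : I = 0 :=
  (Submodule.eq_bot_iff I).2 fun x hx ↦ by simpa using h x hx

theorem exists_maximal_lAnnI_singleton [IsNoetherianRing R] {P : R → Prop} (hP : ∃ a, P a) :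
    ∃ a, P a ∧ ∀ b, P (a * b) → lAnnI R {a * b} ≤ lAnnI R {a} := by
  obtain ⟨a₀, ha₀⟩ := hP
  obtain ⟨_, ⟨⟨a, ha, rfl⟩, hmax⟩⟩ := exists_maximal_of_wellFoundedGT
    (fun L ↦ ∃ a, P a ∧ lAnnI R {a} = L) ⟨_, a₀, ha₀, rfl⟩
  exact ⟨a, ha, fun b hb ↦ hmax ⟨a * b, hb, rfl⟩ (lAnnI_singleton_le_mul a b)⟩

theorem exists_lAnnI_pow_succ_le [IsNoetherianRing R] (I : Ideal R) :
    ∃ n, lAnnI R ((I ^ (n + 1) : Ideal R) : Set R) ≤ lAnnI R ((I ^ n : Ideal R) : Set R) := by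
  obtain ⟨n, hn⟩ := WellFoundedGT.monotone_chain_condition
    (⟨fun n ↦ lAnnI R ((I ^ n : Ideal R) : Set R), fun _ _ h ↦
      lAnnI_anti (Ideal.pow_le_pow_right h)⟩ : ℕ →o Ideal R)
  exact ⟨n, (hn (n + 1) n.le_succ).ge⟩

theorem isNilpotent_of_subset_lSingular [IsNoetherianRing R] {I : Ideal R} [I.IsTwoSided]
    (hI : (I : Set R) ⊆ lSingular R) : IsNilpotent I := by
  obtain ⟨n, hn⟩ := exists_lAnnI_pow_succ_le I
  refine ⟨n, eq_zero_of_one_mem_lAnnI ?_⟩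
  by_contra h1
  obtain ⟨a, ha, hmax⟩ := exists_maximal_lAnnI_singleton
    (P := (· ∉ lAnnI R ((I ^ n : Ideal R) : Set R))) ⟨1, h1⟩
  obtain ⟨z, hz, haz⟩ : ∃ z ∈ I, a * z ∉ lAnnI R ((I ^ n : Ideal R) : Set R) := by
    by_contra! h
    exact ha (hn (Ideal.IsTwoSided.pow_succ (I := I) n ▸ mem_lAnnI_mul.2 h))
  obtain ⟨r, hra, hrz⟩ := isEssentialLIdeal_iff.1 (hI hz) a fun h0 ↦ ha (h0 ▸ zero_mem _)
  rw [mem_lAnnI_singleton, mul_assoc] at hrz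
  exact hra (mem_lAnnI_singleton.1 (hmax z haz (mem_lAnnI_singleton.2 hrz)))

/-- The left annihilator of a left ideal `I`, as a right ideal: `x * a = 0` for all `a ∈ I` implies
`x * c * a = 0`. It makes the right noetherian condition apply to left annihilators. -/
def lAnnRIdeal (I : Ideal R) : RIdeal R where
  __ := lAnnI R (I : Set R)
  smul_mem' c _ hx a ha := by
    rw [MulOpposite.smul_eq_mul_unop, mul_assoc]
    exact hx _ (I.mul_mem_left _ ha)

theorem mul_mem_of_subset_span {X Y : Set R} {N : RIdeal R} {r : R}
    (hX : X ⊆ Submodule.span Rᵐᵒᵖ Y) (h : ∀ y ∈ Y, r * y ∈ N) : ∀ x ∈ X, r * x ∈ N :=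
  fun _ hx ↦ (Submodule.span_le (p := N.comap (LinearMap.mulLeft Rᵐᵒᵖ r))).2 h (hX hx)

instance isNoetherian_mulOpposite_self [IsNoetherianRing Rᵐᵒᵖ] : IsNoetherian Rᵐᵒᵖ R :=
  isNoetherian_of_surjective (LinearMap.toSpanSingleton Rᵐᵒᵖ R 1) <|
    LinearMap.range_eq_top.2 fun x ↦ ⟨MulOpposite.op x, by simp⟩

theorem exists_finset_subset_span_mulOpposite [IsNoetherianRing Rᵐᵒᵖ] (X : Set R) :
    ∃ s : Finset R, (s : Set R) ⊆ X ∧ X ⊆ Submodule.span Rᵐᵒᵖ (s : Set R) := by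
  obtain ⟨s, hs, hspan⟩ := (Submodule.fg_span_iff_fg_span_finset_subset X).1
    (IsNoetherian.noetherian (Submodule.span Rᵐᵒᵖ X))
  exact ⟨s, hs, hspan ▸ Submodule.subset_span⟩

theorem isEssentialLIdeal_lAnnI_of_subset_lSingular [IsNoetherianRing Rᵐᵒᵖ] {X : Set R}
    (hX : X ⊆ lSingular R) : IsEssentialLIdeal R (lAnnI R X) := by
  obtain ⟨s, hsX, hXs⟩ := exists_finset_subset_span_mulOpposite X
  refine (IsEssentialLIdeal.finset_inf s fun a ha ↦ hX (hsX ha)).mono fun x hx ↦ ?_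
  refine mul_mem_of_subset_span (N := ⊥) hXs fun a ha ↦ ?_
  exact mem_lAnnI_singleton.1 (Submodule.mem_finsetInf.1 hx a ha)

theorem exists_lAnnI_pow_succ_le_of_mulOpposite [IsNoetherianRing Rᵐᵒᵖ] (I : Ideal R) :
    ∃ n, lAnnI R ((I ^ (n + 1) : Ideal R) : Set R) ≤ lAnnI R ((I ^ n : Ideal R) : Set R) := by
  obtain ⟨n, hn⟩ := WellFoundedGT.monotone_chain_condition
    (⟨fun n ↦ lAnnRIdeal (I ^ n), fun _ _ h ↦ lAnnI_anti (Ideal.pow_le_pow_right h)⟩ :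
      ℕ →o RIdeal R)
  exact ⟨n, (hn (n + 1) n.le_succ).ge⟩

theorem isNilpotent_of_subset_lSingular_of_mulOpposite [IsNoetherianRing Rᵐᵒᵖ] {I : Ideal R}
    (hI : (I : Set R) ⊆ lSingular R) : IsNilpotent I := by
  obtain ⟨n, hn⟩ := exists_lAnnI_pow_succ_le_of_mulOpposite I
  refine ⟨n, ?_⟩
  by_contra hIn
  obtain ⟨s, hs, hspan⟩ := exists_finset_subset_span_mulOpposite ((I ^ n : Ideal R) : Set R)
  have hs0 : ∃ x ∈ s, x ≠ 0 := by
    by_contra! h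
    exact hIn (eq_zero_of_one_mem_lAnnI
      (mul_mem_of_subset_span (N := ⊥) hspan fun x hx ↦ by simp [h x hx]))
  obtain ⟨r, hrI, x, hx, hrx⟩ :=
    (isEssentialLIdeal_lAnnI_of_subset_lSingular hI).exists_mul_mem s hs0
  have hr : r ∈ lAnnI R ((I ^ (n + 1) : Ideal R) : Set R) := by
    rw [Submodule.pow_succ, mem_lAnnI_mul]
    exact mul_mem_of_subset_span (N := lAnnRIdeal I) hspan hrI
  exact hrx (hn hr x (hs hx))

end Nilpotent

section Semisimple

variable {R : Type*} [Ring R]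

theorem exists_mul_mul_eq_self_of_regular {a v s : R} (hv : a * v ≠ 0)
    (hs : a * v * s * (a * v) = a * v) : ∃ t ≠ 0, t * a * t = t := by
  have hreg : a * (v * s * (a * v) * s) * (a * v) = a * v := by
    calc a * (v * s * (a * v) * s) * (a * v) = a * v * s * (a * v) * s * (a * v) := by
          simp only [mul_assoc]
      _ = a * v := by rw [hs, hs]
  refine ⟨v * s * (a * v) * s, fun h0 ↦ hv ?_, ?_⟩
  · rw [← hreg, h0, mul_zero, zero_mul]
  · calc v * s * (a * v) * s * a * (v * s * (a * v) * s)
        = v * s * (a * v * s * (a * v) * s * (a * v)) * s := by simp only [mul_assoc]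
      _ = v * s * (a * v) * s := by rw [hs, hs]

theorem exists_mul_mul_eq_self [IsNoetherianRing R]
    (h : ∀ a : R, a ≠ 0 → ∃ d ≠ 0, ∃ s, s * a * d = d) {a : R} (ha : a ≠ 0) :
    ∃ t ≠ 0, t * a * t = t := by
  obtain ⟨_, ⟨hb, v, rfl⟩, hmax⟩ := exists_maximal_lAnnI_singleton
    (P := fun b ↦ b ≠ 0 ∧ ∃ v, a * v = b) ⟨a, ha, 1, mul_one a⟩
  obtain ⟨d, hd, s, hs⟩ := h _ hb
  have hbd : a * v * d ≠ 0 := fun h0 ↦ hd (by rw [← hs, mul_assoc, h0, mul_zero])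
  have hann : 1 - a * v * s ∈ lAnnI R {a * v} := by
    apply hmax d ⟨hbd, v * d, (mul_assoc a v d).symm⟩
    rw [mem_lAnnI_singleton, sub_mul, one_mul, mul_assoc _ s, ← mul_assoc s, hs, sub_self]
  rw [mem_lAnnI_singleton, sub_mul, one_mul, sub_eq_zero] at hann
  exact exists_mul_mul_eq_self_of_regular hb hann.symm

theorem exists_isIdempotentElem_span_singleton_eq_span_pair {e f : R} (he : IsIdempotentElem e)
    (hf : IsIdempotentElem f) (hfe : f * e = 0) :
    ∃ g, IsIdempotentElem g ∧ Ideal.span {g} = Ideal.span {e, f} := by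
  have heg : e * (e + f - e * f) = e := by
    rw [mul_sub, mul_add, ← mul_assoc, he.eq, add_sub_cancel_right]
  have hfg : f * (e + f - e * f) = f := by
    rw [mul_sub, mul_add, ← mul_assoc, hfe, hf.eq, zero_mul, zero_add, sub_zero]
  refine ⟨e + f - e * f, ?_, le_antisymm ?_ ?_⟩
  · rw [IsIdempotentElem, sub_mul, add_mul, mul_assoc e f, heg, hfg]
  · rw [Ideal.span_singleton_le_iff_mem]
    have he : e ∈ Ideal.span {e, f} := Ideal.subset_span (by simp)
    have hf : f ∈ Ideal.span {e, f} := Ideal.subset_span (by simp)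
    exact sub_mem (add_mem he hf) (Ideal.mul_mem_left _ e hf)
  · rw [Ideal.span_le, Set.pair_subset_iff]
    exact ⟨Ideal.mem_span_singleton'.2 ⟨e, heg⟩, Ideal.mem_span_singleton'.2 ⟨f, hfg⟩⟩

theorem exists_isIdempotentElem_span_singleton_eq [IsNoetherianRing R]
    (h : ∀ a : R, a ≠ 0 → ∃ t ≠ 0, t * a * t = t) (I : Ideal R) :
    ∃ e, IsIdempotentElem e ∧ Ideal.span {e} = I := by
  obtain ⟨_, ⟨⟨e, he, rfl⟩, heI⟩, hmax⟩ := exists_maximal_of_wellFoundedGT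
    (fun L : Ideal R ↦ (∃ e, IsIdempotentElem e ∧ Ideal.span {e} = L) ∧ L ≤ I)
    ⟨⊥, ⟨0, .zero, Ideal.span_singleton_eq_bot.2 rfl⟩, bot_le⟩
  refine ⟨e, he, heI.antisymm fun x hxI ↦ ?_⟩
  rw [mem_span_singleton_iff_mul_eq_self he, eq_comm, ← sub_eq_zero]
  by_contra hy
  obtain ⟨t, ht0, ht⟩ := h _ hy
  have heI' : e ∈ I := (Ideal.span_singleton_le_iff_mem I).1 heI
  have hfe : t * (x - x * e) * e = 0 := by
    rw [mul_assoc, sub_mul, mul_assoc, he.eq, sub_self, mul_zero]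
  have hf : IsIdempotentElem (t * (x - x * e)) := by
    rw [IsIdempotentElem, ← mul_assoc, ht]
  have hfI : t * (x - x * e) ∈ I := I.mul_mem_left t (I.sub_mem hxI (I.mul_mem_left x heI'))
  obtain ⟨g, hg, hgspan⟩ := exists_isIdempotentElem_span_singleton_eq_span_pair he hf hfe
  have hle : Ideal.span {e, t * (x - x * e)} ≤ Ideal.span {e} :=
    hmax ⟨⟨g, hg, hgspan⟩, Ideal.span_le.2 (Set.pair_subset heI' hfI)⟩
      (Ideal.span_mono (by simp))
  have hf0 : t * (x - x * e) = 0 := by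
    rw [← hfe, (mem_span_singleton_iff_mul_eq_self he).1 (hle (Ideal.subset_span (.inr rfl)))]
  rw [← ht, hf0, zero_mul] at ht0
  exact ht0 rfl

theorem isSemisimpleRing_of_forall_exists_mul_mul_eq [IsNoetherianRing R]
    (h : ∀ a : R, a ≠ 0 → ∃ d ≠ 0, ∃ s, s * a * d = d) : IsSemisimpleRing R := by
  refine (isSemisimpleModule_iff R R).2 ⟨fun I ↦ ?_⟩
  obtain ⟨e, he, rfl⟩ := exists_isIdempotentElem_span_singleton_eq
    (fun a ha ↦ exists_mul_mul_eq_self h ha) I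
  exact ⟨_, isCompl_span_singleton_one_sub he⟩

end Semisimple

section Semiprimary

variable {R : Type*} [Ring R]

theorem isSemisimpleRing_quotient_jacobson [IsNoetherianRing R]
    (h : ∀ a ∉ Ring.jacobson R, ∃ d ∉ Ring.jacobson R, ∃ s, s * a * d = d) :
    IsSemisimpleRing (R ⧸ Ring.jacobson R) := by
  have : IsNoetherianRing (R ⧸ Ring.jacobson R) :=
    isNoetherianRing_of_surjective _ _ (Ideal.Quotient.mk _) Ideal.Quotient.mk_surjective
  refine isSemisimpleRing_of_forall_exists_mul_mul_eq fun a ha ↦ ?_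
  obtain ⟨a, rfl⟩ := Ideal.Quotient.mk_surjective a
  obtain ⟨d, hd, s, hs⟩ := h a fun haJ ↦ ha (Ideal.Quotient.eq_zero_iff_mem.2 haJ)
  refine ⟨Ideal.Quotient.mk _ d, fun hd0 ↦ hd (Ideal.Quotient.eq_zero_iff_mem.1 hd0),
    Ideal.Quotient.mk _ s, ?_⟩
  rw [← map_mul, ← map_mul, hs]

theorem isSemisimpleRing_quotient_jacobson_of_mulOpposite
    (h : IsSemisimpleRing (Rᵐᵒᵖ ⧸ Ring.jacobson Rᵐᵒᵖ)) :
    IsSemisimpleRing (R ⧸ Ring.jacobson R) := by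
  rw [← isSemisimpleRing_mulOpposite_iff]
  let f : Rᵐᵒᵖ ⧸ Ring.jacobson Rᵐᵒᵖ →+* (R ⧸ Ring.jacobson R)ᵐᵒᵖ :=
    Ideal.Quotient.lift _ (RingHom.op (Ideal.Quotient.mk (Ring.jacobson R))) fun a ha ↦ by
      simpa [Ideal.Quotient.eq_zero_iff_mem] using op_mem_jacobson_iff (x := a.unop).1 ha
  have hf : Function.Surjective f := Ideal.Quotient.lift_surjective_of_surjective _ _ fun x ↦ by
    obtain ⟨y, hy⟩ := Ideal.Quotient.mk_surjective x.unop
    exact ⟨MulOpposite.op y, by simp [hy]⟩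
  exact RingHom.isSemisimpleRing_of_surjective f hf

theorem unop_mem_jacobson_pow {n : ℕ} {x : Rᵐᵒᵖ} (hx : x ∈ Ring.jacobson Rᵐᵒᵖ ^ (n + 1)) :
    x.unop ∈ Ring.jacobson R ^ (n + 1) := by
  induction n generalizing x with
  | zero =>
    rw [zero_add, Submodule.pow_one] at hx ⊢
    exact op_mem_jacobson_iff.1 hx
  | succ n ih =>
    rw [Submodule.pow_succ] at hx
    rw [Submodule.pow_succ' _ n.succ_ne_zero]
    induction hx using Submodule.mul_induction_on' with
    | mem_mul_mem a ha b hb => exact Submodule.mul_mem_mul (op_mem_jacobson_iff.1 hb) (ih ha)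
    | add a _ b _ ha hb => exact add_mem ha hb

theorem isNilpotent_jacobson_mulOpposite (h : IsNilpotent (Ring.jacobson R)) :
    IsNilpotent (Ring.jacobson Rᵐᵒᵖ) := by
  obtain ⟨n, hn⟩ := h
  refine ⟨n + 1, (Submodule.eq_bot_iff _).2 fun x hx ↦ ?_⟩
  have hx := unop_mem_jacobson_pow hx
  rw [Submodule.pow_succ, hn, zero_mul] at hx
  exact MulOpposite.unop_injective hx

theorem exists_mul_ne_zero_and_jacobson_le_lAnnI (hJ : IsNilpotent (Ring.jacobson R)) {x : R}
    (hx : x ≠ 0) : ∃ r, r * x ≠ 0 ∧ Ring.jacobson R ≤ lAnnI R {r * x} := by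
  obtain ⟨n, hn⟩ := hJ
  have hnx : Ring.jacobson R ^ n ≤ lAnnI R {x} := by rw [hn]; exact bot_le
  clear hn
  induction n generalizing x with
  | zero =>
    rw [Submodule.pow_zero, Ideal.one_eq_top, top_le_iff, Ideal.eq_top_iff_one,
      mem_lAnnI_singleton, one_mul] at hnx
    exact absurd hnx hx
  | succ n ih =>
    by_cases hJx : Ring.jacobson R ≤ lAnnI R {x}
    · exact ⟨1, by rwa [one_mul], by rwa [one_mul]⟩
    obtain ⟨j, hj, hjx⟩ := SetLike.not_le_iff_exists.1 hJx
    rw [mem_lAnnI_singleton] at hjx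
    obtain ⟨r, hr⟩ := ih hjx fun i hi ↦ by
      have hij : i * j ∈ Ring.jacobson R ^ (n + 1) := by
        rw [Submodule.pow_succ]
        exact Submodule.mul_mem_mul hi hj
      rw [mem_lAnnI_singleton, ← mul_assoc]
      exact mem_lAnnI_singleton.1 (hnx hij)
    exact ⟨r * j, by rwa [mul_assoc]⟩

end Semiprimary

section Kasch

variable {R : Type*} [Ring R]

theorem isSemisimpleModule_quotient_jacobson [IsSemisimpleRing (R ⧸ Ring.jacobson R)] :
    IsSemisimpleModule R (R ⧸ Ring.jacobson R) := by
  let f : (R ⧸ Ring.jacobson R) →ₛₗ[Ideal.Quotient.mk (Ring.jacobson R)] R ⧸ Ring.jacobson R :=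
    { AddMonoidHom.id _ with map_smul' := fun r x ↦ rfl }
  have : RingHomSurjective (Ideal.Quotient.mk (Ring.jacobson R)) := ⟨Ideal.Quotient.mk_surjective⟩
  exact (LinearMap.isSemisimpleModule_iff_of_bijective f Function.bijective_id).2 inferInstance

theorem isMaximal_lAnnI_singleton {m : Ideal R} [IsSimpleModule R m] {x : R} (hx : x ∈ m)
    (hx0 : x ≠ 0) : (lAnnI R {x}).IsMaximal := by
  have hker : lAnnI R {x} = LinearMap.ker (LinearMap.toSpanSingleton R m ⟨x, hx⟩) := by
    ext r
    simp [mem_lAnnI_singleton, Subtype.ext_iff]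
  rw [hker]
  exact IsSimpleModule.ker_toSpanSingleton_isMaximal R (Subtype.coe_ne_coe.1 hx0)

theorem exists_isMaximal_lAnnI [IsSemisimpleRing (R ⧸ Ring.jacobson R)] {x : R} (hx : x ≠ 0)
    (hJx : Ring.jacobson R ≤ lAnnI R {x}) : ∃ r, (lAnnI R {r * x}).IsMaximal := by
  have := isSemisimpleModule_quotient_jacobson (R := R)
  let g : R ⧸ Ring.jacobson R →ₗ[R] R := (Ring.jacobson R).liftQ (LinearMap.toSpanSingleton R R x)
    fun j hj ↦ mem_lAnnI_singleton.1 (hJx hj)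
  have hg : LinearMap.range g = Ideal.span {x} :=
    ((Ring.jacobson R).range_liftQ _ _).trans (LinearMap.range_toSpanSingleton x)
  have := IsSemisimpleModule.range g
  obtain ⟨m, hm, hsimple⟩ := (IsSemisimpleModule.eq_bot_or_exists_simple_le
    (LinearMap.range g)).resolve_left (by simpa [hg] using hx)
  obtain ⟨y, hy, hy0⟩ := m.exists_mem_ne_zero_of_ne_bot
    (m.nontrivial_iff_ne_bot.1 (IsSimpleModule.nontrivial R m))
  obtain ⟨r, rfl⟩ := Ideal.mem_span_singleton'.1 (hg ▸ hm hy)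
  exact ⟨r, isMaximal_lAnnI_singleton hy hy0⟩

theorem nonempty_quotient_linearEquiv_iff {M N : Ideal R} [hM : M.IsMaximal] [hN : N.IsMaximal] :
    Nonempty ((R ⧸ M) ≃ₗ[R] R ⧸ N) ↔ ∃ u ∉ N, ∀ r ∈ M, r * u ∈ N := by
  have := isSimpleModule_iff_isCoatom.2 hM.out
  have := isSimpleModule_iff_isCoatom.2 hN.out
  constructor
  · rintro ⟨e⟩
    obtain ⟨u, hu⟩ := N.mkQ_surjective (e (M.mkQ 1))
    have hmul (r : R) : r * u ∈ N ↔ r ∈ M := by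
      rw [← Submodule.Quotient.mk_eq_zero N, ← Submodule.Quotient.mk_eq_zero M,
        ← Submodule.mkQ_apply, ← smul_eq_mul, map_smul, hu, ← map_smul, ← map_smul,
        EmbeddingLike.map_eq_zero_iff, smul_eq_mul, mul_one, Submodule.mkQ_apply]
    refine ⟨u, fun hu ↦ M.ne_top_iff_one.1 hM.ne_top ?_, fun r hr ↦ (hmul r).2 hr⟩
    rwa [← hmul, one_mul]
  · rintro ⟨u, hu, hMu⟩
    let f : R ⧸ M →ₗ[R] R ⧸ N := M.mapQ N (LinearMap.toSpanSingleton R R u) hMu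
    refine ⟨LinearEquiv.ofBijective f (LinearMap.bijective_of_ne_zero fun hf ↦ hu ?_)⟩
    have hfu : f (M.mkQ 1) = N.mkQ u := congrArg N.mkQ (one_mul u)
    rw [hf, LinearMap.zero_apply] at hfu
    exact (Submodule.Quotient.mk_eq_zero N).1 hfu.symm

/-- Two maximal left ideals are identified when their simple quotients are isomorphic; the
quotient of this setoid is the set of isomorphism classes of simple left modules. -/
def simpleModuleSetoid (R : Type*) [Ring R] : Setoid {M : Ideal R // M.IsMaximal} where
  r M N := Nonempty ((R ⧸ M.1) ≃ₗ[R] R ⧸ N.1)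
  iseqv := ⟨fun _ ↦ ⟨.refl R _⟩, fun ⟨e⟩ ↦ ⟨e.symm⟩, fun ⟨e⟩ ⟨e'⟩ ↦ ⟨e.trans e'⟩⟩

theorem finite_quotient_simpleModuleSetoid [IsSemisimpleRing (R ⧸ Ring.jacobson R)] :
    Finite (Quotient (simpleModuleSetoid R)) := by
  have := isSemisimpleModule_quotient_jacobson (R := R)
  have hsub (M : {M : Ideal R // M.IsMaximal}) :
      ∃ S : Submodule R (R ⧸ Ring.jacobson R), Nonempty (S ≃ₗ[R] R ⧸ M.1) := by
    have := M.2
    let g : R ⧸ Ring.jacobson R →ₗ[R] R ⧸ M.1 :=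
      Submodule.factor (Ring.jacobson_le_of_isMaximal M.1)
    obtain ⟨S, ⟨e⟩⟩ := IsSemisimpleModule.exists_submodule_linearEquiv_quotient (LinearMap.ker g)
    exact ⟨S, ⟨e.trans (g.quotKerEquivOfSurjective (Submodule.factor_surjective _))⟩⟩
  choose S e using hsub
  have hS (M) : IsSimpleModule R (S M) := by
    have := isSimpleModule_iff_isCoatom.2 M.2.out
    exact .congr (e M).some
  let F (q : Quotient (simpleModuleSetoid R)) : isotypicComponents R (R ⧸ Ring.jacobson R) :=
    ⟨isotypicComponent R _ (S q.out), S q.out, hS _, rfl⟩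
  refine Finite.of_injective F fun p q hpq ↦ Quotient.out_equiv_out.1 ?_
  have hle : S p.out ≤ isotypicComponent R _ (S q.out) :=
    (S p.out).le_isotypicComponent.trans_eq (Subtype.ext_iff.1 hpq)
  obtain ⟨e'⟩ := isIsotypicOfType_submodule_iff.1 (.isotypicComponent R _ (S q.out)) _ hle
  exact ⟨(e p.out).some.symm.trans (e'.trans (e q.out).some)⟩

theorem exists_isIdempotentElem_mul_mem_jacobson [IsSemisimpleRing (R ⧸ Ring.jacobson R)]
    (hJ : IsNilpotent (Ring.jacobson R)) (M : Ideal R) [hM : M.IsMaximal] :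
    ∃ f : R, IsIdempotentElem f ∧ f ≠ 0 ∧ ∀ r ∈ M, r * f ∈ Ring.jacobson R := by
  let q := Ideal.Quotient.mk (Ring.jacobson R)
  obtain ⟨e, he, hMe⟩ := IsSemisimpleRing.ideal_eq_span_idempotent (M.map q)
  have hker : ∀ x ∈ RingHom.ker q, IsNilpotent x := by
    obtain ⟨n, hn⟩ := hJ
    refine fun x hx ↦ ⟨n, ?_⟩
    have hxn := Ideal.pow_mem_pow hx n
    rwa [Ideal.mk_ker, hn] at hxn
  obtain ⟨f, hf, hqf⟩ := exists_isIdempotentElem_eq_of_ker_isNilpotent q hker (1 - e)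
    (Ideal.Quotient.mk_surjective _) he.one_sub
  refine ⟨f, hf, ?_, fun r hr ↦ ?_⟩
  · rintro rfl
    have he1 : e = 1 := (sub_eq_zero.1 (hqf.symm.trans (map_zero q))).symm
    rw [he1, Ideal.span_singleton_one] at hMe
    apply hM.ne_top
    rw [← Ideal.comap_map_mk (Ring.jacobson_le_of_isMaximal M), hMe, Ideal.comap_top]
  · have hre : q r * e = q r :=
      (mem_span_singleton_iff_mul_eq_self he).1 (hMe ▸ Ideal.mem_map_of_mem q hr)
    rw [← Ideal.Quotient.eq_zero_iff_mem, map_mul]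
    change q r * q f = 0
    rw [hqf, mul_sub, mul_one, hre, sub_self]

theorem IsLeftPInjective.exists_mul_mul_notMem_jacobson (hP : IsLeftPInjective R) {a b f g : R}
    (haf : a * f = a) (hbg : b * g = b) [ha : (lAnnI R {a}).IsMaximal] [(lAnnI R {b}).IsMaximal]
    (hab : Nonempty ((R ⧸ lAnnI R {a}) ≃ₗ[R] R ⧸ lAnnI R {b})) :
    ∃ y, g * y * f ∉ Ring.jacobson R := by
  obtain ⟨u, hu, hau⟩ := nonempty_quotient_linearEquiv_iff.1 hab
  rw [mem_lAnnI_singleton] at hu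
  have hann : lAnnI R {a} = lAnnI R {u * b} := by
    refine ha.eq_of_le (fun htop ↦ hu ?_) fun r hr ↦ ?_
    · rwa [Ideal.eq_top_iff_one, mem_lAnnI_singleton, one_mul] at htop
    · rw [mem_lAnnI_singleton, ← mul_assoc]
      exact mem_lAnnI_singleton.1 (hau r hr)
  simp only [SetLike.ext_iff, mem_lAnnI_singleton] at hann
  obtain ⟨x, hx⟩ := (hP a (u * b)).1 fun r ↦ (hann r).1
  obtain ⟨y, hy⟩ := (hP (u * b) a).1 fun r ↦ (hann r).2
  refine ⟨y, fun hJ ↦ hu ?_⟩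
  have hunit := mem_jacobson_iff_isUnit_one_sub_mul_left.1 hJ x
  have hfix : a = a * (x * (g * y * f)) := calc
    a = u * b * y * f := by rw [← hy, haf]
    _ = u * (b * g) * y * f := by rw [hbg]
    _ = u * b * (g * y * f) := by simp only [mul_assoc]
    _ = a * (x * (g * y * f)) := by rw [hx, mul_assoc]
  have ha0 : a = 0 := hunit.mul_left_eq_zero.1 (by rw [mul_sub, mul_one, ← hfix, sub_self])
  rw [hx, ha0, zero_mul]

theorem exists_isMaximal_lAnnI_mul_eq_self [IsSemisimpleRing (R ⧸ Ring.jacobson R)]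
    (hJ : IsNilpotent (Ring.jacobson R)) (M : Ideal R) [M.IsMaximal] :
    ∃ f a : R, (∀ r ∈ M, r * f ∈ Ring.jacobson R) ∧ a * f = a ∧ (lAnnI R {a}).IsMaximal := by
  obtain ⟨f, hf, hf0, hMf⟩ := exists_isIdempotentElem_mul_mem_jacobson hJ M
  obtain ⟨r, hrf, hJ⟩ := exists_mul_ne_zero_and_jacobson_le_lAnnI hJ hf0
  obtain ⟨s, hs⟩ := exists_isMaximal_lAnnI hrf hJ
  exact ⟨f, s * (r * f), hMf, by simp only [mul_assoc, hf.eq], hs⟩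

/-- `R` is left Kasch if every simple left module embeds in `R`; since such a module is `R ⧸ M`
with `M` maximal, this says that `M` annihilates some nonzero element of `R`. -/
def IsLeftKasch (R : Type*) [Ring R] : Prop :=
  ∀ M : Ideal R, M.IsMaximal → ∃ a ≠ 0, M ≤ lAnnI R {a}

theorem IsLeftPInjective.isLeftKasch (hP : IsLeftPInjective R)
    [IsSemisimpleRing (R ⧸ Ring.jacobson R)] (hJ : IsNilpotent (Ring.jacobson R)) :
    IsLeftKasch R := by
  have hfin := finite_quotient_simpleModuleSetoid (R := R)
  have hex (M : {M : Ideal R // M.IsMaximal}) := have := M.2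
    exists_isMaximal_lAnnI_mul_eq_self hJ M.1
  choose f a hMf haf hmax using hex
  -- `F` sends each class of simple modules to the class of some minimal left ideal `R * a`. It is
  -- an injective self-map of a finite set, so every simple module is one of these ideals.
  let F (q : Quotient (simpleModuleSetoid R)) : Quotient (simpleModuleSetoid R) :=
    ⟦⟨lAnnI R {a q.out}, hmax q.out⟩⟧
  have hF : Function.Injective F := by
    intro p q hpq
    have := hmax p.out
    have := hmax q.out
    have := p.out.2
    have := q.out.2
    obtain ⟨y, hy⟩ := hP.exists_mul_mul_notMem_jacobson (haf p.out) (haf q.out)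
      (Quotient.exact hpq)
    refine (Quotient.out_equiv_out.1 (nonempty_quotient_linearEquiv_iff.2
      ⟨f q.out * y, fun hmem ↦ hy (hMf p.out _ hmem), fun r hr ↦ ?_⟩)).symm
    rw [← mul_assoc]
    exact Ring.jacobson_le_of_isMaximal _ (Ideal.mul_mem_right _ _ (hMf q.out r hr))
  intro N hN
  obtain ⟨q, hq⟩ := Finite.surjective_of_injective hF ⟦⟨N, hN⟩⟧
  have := hmax q.out
  obtain ⟨u, hu, hNu⟩ := nonempty_quotient_linearEquiv_iff.1 (Quotient.exact hq.symm)
  refine ⟨u * a q.out, fun h ↦ hu (mem_lAnnI_singleton.2 h), fun r hr ↦ ?_⟩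
  rw [mem_lAnnI_singleton, ← mul_assoc]
  exact mem_lAnnI_singleton.1 (hNu r hr)

theorem IsLeft2Injective.exists_eq_mul_of_isLeftKasch (h2 : IsLeft2Injective R)
    (hK : IsLeftKasch R) {a x : R} (h : ∀ u, a * u = 0 → x * u = 0) : ∃ s, x = s * a := by
  by_contra hxa
  let I : Ideal R := Submodule.comap (LinearMap.toSpanSingleton R R x) (Ideal.span {a})
  obtain ⟨M, hM, hIM⟩ := I.exists_le_maximal fun htop ↦ hxa <| by
    have h1 : (1 : R) * x ∈ Ideal.span {a} := (Ideal.eq_top_iff_one I).1 htop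
    obtain ⟨s, hs⟩ := Ideal.mem_span_singleton'.1 h1
    exact ⟨s, by rw [hs, one_mul]⟩
  obtain ⟨k, hk, hMk⟩ := hK M hM
  obtain ⟨c, hkc, hac⟩ := h2.exists_eq_mul (a := x) (b := a) (x := k) (y := 0) fun u v huv ↦ by
    have hu : u * x ∈ Ideal.span {a} :=
      Ideal.mem_span_singleton'.2 ⟨-v, by rw [neg_mul, eq_neg_of_add_eq_zero_left huv]⟩
    rw [mul_zero, add_zero, mem_lAnnI_singleton.1 (hMk (hIM hu))]
  exact hk (hkc.trans (h c hac.symm))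

end Kasch

section Length

variable {A B U X : Type*} [Ring A] [Ring B] [AddCommGroup U] [Module A U] [Module B U]
  [SMulCommClass A B U] [AddCommGroup X] [Module A X]

variable (B U) in
theorem exact_lcomp_mkQ_lcomp_subtype (N : Submodule A X) :
    Function.Exact (N.mkQ.lcomp B U) (N.subtype.lcomp B U) := by
  refine fun f ↦ ⟨fun hf ↦ ?_, ?_⟩
  · have hN : N ≤ LinearMap.ker f := fun x hx ↦ LinearMap.congr_fun hf ⟨x, hx⟩
    exact ⟨N.liftQ f hN, N.liftQ_mkQ f hN⟩
  · rintro ⟨g, rfl⟩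
    ext x
    change g (N.mkQ x) = 0
    rw [Submodule.mkQ_apply, (Submodule.Quotient.mk_eq_zero N).2 x.2, map_zero]

variable (B U) in
theorem length_linearMap_eq_add (N : Submodule A X) :
    Module.length B (X →ₗ[A] U) = Module.length B ((X ⧸ N) →ₗ[A] U) +
      Module.length B (LinearMap.range (N.subtype.lcomp B U)) := by
  refine Module.length_eq_add_of_exact (N.mkQ.lcomp B U) (N.subtype.lcomp B U).rangeRestrict
    (LinearMap.lcomp_injective_of_surjective _ N.mkQ_surjective)
    (LinearMap.surjective_rangeRestrict _) ?_
  intro f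
  rw [← exact_lcomp_mkQ_lcomp_subtype B U N f, Subtype.ext_iff]
  rfl

theorem length_eq_add_quotient (N : Submodule A X) :
    Module.length A X = Module.length A N + Module.length A (X ⧸ N) :=
  Module.length_eq_add_of_exact N.subtype N.mkQ N.subtype_injective N.mkQ_surjective
    (LinearMap.exact_subtype_mkQ N)

theorem length_linearMap_le_one_of_isSimpleModule [IsSimpleModule A X]
    (hU : ∀ a x : U, (∀ r : A, r • a = 0 → r • x = 0) → ∃ b : B, x = b • a) :
    Module.length B (X →ₗ[A] U) ≤ 1 := by
  rcases subsingleton_or_nontrivial (X →ₗ[A] U) with h | h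
  · rw [Module.length_eq_zero]
    exact zero_le_one
  have : IsSimpleModule B (X →ₗ[A] U) := by
    rw [isSimpleModule_iff_toSpanSingleton_surjective]
    refine ⟨h, fun f hf g ↦ ?_⟩
    have hinj : Function.Injective f := (LinearMap.injective_or_eq_zero f).resolve_right hf
    have := IsSimpleModule.nontrivial A X
    obtain ⟨v, hv⟩ := exists_ne (0 : X)
    obtain ⟨b, hb⟩ := hU (f v) (g v) fun r hr ↦ by
      rw [← map_smul, map_eq_zero_iff f hinj] at hr
      rw [← map_smul, hr, map_zero]
    refine ⟨b, LinearMap.ext fun w ↦ ?_⟩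
    obtain ⟨r, rfl⟩ := IsSimpleModule.toSpanSingleton_surjective A hv w
    simp only [LinearMap.toSpanSingleton_apply, LinearMap.smul_apply, map_smul, hb,
      smul_comm r b]
  exact (Module.length_eq_one B (X →ₗ[A] U)).le

theorem length_linearMap_le (hX : IsFiniteLength A X)
    (hU : ∀ a x : U, (∀ r : A, r • a = 0 → r • x = 0) → ∃ b : B, x = b • a) :
    Module.length B (X →ₗ[A] U) ≤ Module.length A X := by
  induction hX with
  | of_subsingleton =>
    rw [Module.length_eq_zero]
    exact zero_le
  | @of_simple_quotient M _ _ N _ _ ih =>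
    calc Module.length B (M →ₗ[A] U)
        = Module.length B (M ⧸ N →ₗ[A] U) +
            Module.length B (LinearMap.range (N.subtype.lcomp B U)) := length_linearMap_eq_add B U N
      _ ≤ 1 + Module.length A N := by
        refine add_le_add (length_linearMap_le_one_of_isSimpleModule hU) (le_trans ?_ ih)
        exact Module.length_le_of_injective _ (Submodule.subtype_injective _)
      _ = Module.length A M := by
        rw [length_eq_add_quotient N, Module.length_eq_one A (M ⧸ N), add_comm]

theorem lcomp_subtype_surjective_of_length_le (N : Submodule A X) (hX : IsFiniteLength A X)
    (hU : ∀ a x : U, (∀ r : A, r • a = 0 → r • x = 0) → ∃ b : B, x = b • a)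
    (hlen : Module.length A X ≤ Module.length B (X →ₗ[A] U)) :
    Function.Surjective (N.subtype.lcomp B U) := by
  obtain ⟨_, _⟩ := isFiniteLength_iff_isNoetherian_isArtinian.1 hX
  have hN : IsFiniteLength A N :=
    isFiniteLength_iff_isNoetherian_isArtinian.2 ⟨inferInstance, inferInstance⟩
  have hQ : IsFiniteLength A (X ⧸ N) :=
    isFiniteLength_iff_isNoetherian_isArtinian.2 ⟨inferInstance, inferInstance⟩
  have hN_le := length_linearMap_le hN hU
  have hHom : IsFiniteLength B (N →ₗ[A] U) :=
    Module.length_ne_top_iff.1 (ne_top_of_le_ne_top (Module.length_ne_top_iff.2 hN) hN_le)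
  obtain ⟨_, _⟩ := isFiniteLength_iff_isNoetherian_isArtinian.1 hHom
  have hle : Module.length A N ≤ Module.length B (LinearMap.range (N.subtype.lcomp B U)) := by
    rw [← ENat.add_le_add_iff_left (Module.length_ne_top_iff.2 hQ)]
    calc Module.length A (X ⧸ N) + Module.length A N
        = Module.length A X := by rw [length_eq_add_quotient N, add_comm]
      _ ≤ Module.length B (X →ₗ[A] U) := hlen
      _ = Module.length B ((X ⧸ N) →ₗ[A] U) +
            Module.length B (LinearMap.range (N.subtype.lcomp B U)) :=
        length_linearMap_eq_add B U N
      _ ≤ Module.length A (X ⧸ N) + Module.length B (LinearMap.range (N.subtype.lcomp B U)) :=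
        add_le_add_left (length_linearMap_le hQ hU) _
  rw [← LinearMap.range_eq_top]
  by_contra hne
  exact (Submodule.length_lt hne).not_ge (hN_le.trans hle)

end Length

section LengthSelf

variable {R : Type*} [Ring R]

theorem length_mulOpposite_self : Module.length Rᵐᵒᵖ R = Module.length Rᵐᵒᵖ Rᵐᵒᵖ := by
  refine (LinearEquiv.ofBijective (LinearMap.toSpanSingleton Rᵐᵒᵖ R (1 : R)) ?_).length_eq.symm
  exact ⟨fun x y h ↦ MulOpposite.unop_injective (by simpa using h), fun x ↦ ⟨.op x, by simp⟩⟩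

theorem length_linearMap_self :
    Module.length Rᵐᵒᵖ (R →ₗ[R] R) = Module.length Rᵐᵒᵖ Rᵐᵒᵖ := by
  rw [(LinearMap.ringLmapEquivSelf R Rᵐᵒᵖ R).length_eq, length_mulOpposite_self]

theorem IsLeftPInjective.exists_eq_smul (hP : IsLeftPInjective R) {a x : R}
    (h : ∀ r : R, r • a = 0 → r • x = 0) : ∃ s : Rᵐᵒᵖ, x = s • a := by
  obtain ⟨s, hs⟩ := (hP a x).1 h
  exact ⟨.op s, hs⟩

theorem IsLeftPInjective.length_mulOpposite_le (hP : IsLeftPInjective R)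
    (hR : IsFiniteLength R R) : Module.length Rᵐᵒᵖ Rᵐᵒᵖ ≤ Module.length R R := by
  rw [← length_linearMap_self]
  exact length_linearMap_le hR fun _ _ ↦ hP.exists_eq_smul

theorem length_le_length_mulOpposite
    (hP : ∀ a x : R, (∀ u, a * u = 0 → x * u = 0) → ∃ s, x = s * a)
    (hR : IsFiniteLength Rᵐᵒᵖ Rᵐᵒᵖ) : Module.length R R ≤ Module.length Rᵐᵒᵖ Rᵐᵒᵖ := by
  rw [← (LinearMap.ringLmapEquivSelf Rᵐᵒᵖ R R).length_eq]
  exact length_linearMap_le hR fun a x h ↦ hP a x fun u hu ↦ h (.op u) hu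

theorem IsLeftPInjective.isNoetherianRing_mulOpposite [IsArtinianRing R]
    (hP : IsLeftPInjective R) : IsNoetherianRing Rᵐᵒᵖ := by
  have hR : IsFiniteLength R R :=
    isFiniteLength_iff_isNoetherian_isArtinian.2 ⟨inferInstance, inferInstance⟩
  have hRop : IsFiniteLength Rᵐᵒᵖ Rᵐᵒᵖ := Module.length_ne_top_iff.1
    (ne_top_of_le_ne_top (Module.length_ne_top_iff.2 hR) (hP.length_mulOpposite_le hR))
  exact (isFiniteLength_iff_isNoetherian_isArtinian.1 hRop).1

theorem IsLeftPInjective.isNoetherianRing_and_baer [IsArtinianRing Rᵐᵒᵖ]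
    (hPl : IsLeftPInjective R)
    (hPr : ∀ a x : R, (∀ u, a * u = 0 → x * u = 0) → ∃ s, x = s * a) :
    IsNoetherianRing R ∧ Module.Baer R R := by
  have hRop : IsFiniteLength Rᵐᵒᵖ Rᵐᵒᵖ :=
    isFiniteLength_iff_isNoetherian_isArtinian.2 ⟨inferInstance, inferInstance⟩
  have hle := length_le_length_mulOpposite hPr hRop
  have hR : IsFiniteLength R R :=
    Module.length_ne_top_iff.1 (ne_top_of_le_ne_top (Module.length_ne_top_iff.2 hRop) hle)
  refine ⟨(isFiniteLength_iff_isNoetherian_isArtinian.1 hR).1, fun I g ↦ ?_⟩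
  obtain ⟨f, rfl⟩ := lcomp_subtype_surjective_of_length_le (B := Rᵐᵒᵖ) I hR
    (fun _ _ ↦ hPl.exists_eq_smul) (by rwa [length_linearMap_self]) g
  exact ⟨f, fun _ _ ↦ rfl⟩

end LengthSelf

section RightNoetherian

variable {R : Type*} [Ring R]

theorem exists_notMem_jacobson_mul_mul_eq_self
    (hC : ∀ C : Ideal R, IsComplementLeftIdeal R C → C ≠ ⊥ → ¬ IsSmallLeftIdeal R C)
    (hP : IsLeftPInjective R) {a : R} (ha : a ∉ Ring.jacobson R) :
    ∃ d ∉ Ring.jacobson R, ∃ s, d * a * s = d := by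
  obtain ⟨D, hD, hD0, hDa⟩ := hP.exists_isComplementLeftIdeal ha
  obtain ⟨d, hd, hdJ⟩ := SetLike.not_le_iff_exists.1
    fun hle ↦ hC D hD hD0 (isSmallLeftIdeal_of_le_jacobson hle)
  exact ⟨d, hdJ, hDa d hd⟩

theorem isNoetherianRing_and_baer_of_isLeft2Injective [IsNoetherianRing Rᵐᵒᵖ]
    (h2 : IsLeft2Injective R)
    (hC : ∀ C : Ideal R, IsComplementLeftIdeal R C → C ≠ ⊥ → ¬ IsSmallLeftIdeal R C) :
    IsNoetherianRing R ∧ Module.Baer R R := by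
  have hP := h2.isLeftPInjective
  have hss : IsSemisimpleRing (Rᵐᵒᵖ ⧸ Ring.jacobson Rᵐᵒᵖ) := by
    refine isSemisimpleRing_quotient_jacobson fun a ha ↦ ?_
    rw [← MulOpposite.op_unop a, op_mem_jacobson_iff] at ha
    obtain ⟨d, hd, s, hs⟩ := exists_notMem_jacobson_mul_mul_eq_self hC hP ha
    refine ⟨.op d, op_mem_jacobson_iff.not.2 hd, .op s, MulOpposite.unop_injective ?_⟩
    simpa [mul_assoc] using hs
  have hnil : IsNilpotent (Ring.jacobson R) :=
    isNilpotent_of_subset_lSingular_of_mulOpposite fun _ ↦ hP.mem_lSingular_iff.2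
  have : IsSemiprimaryRing Rᵐᵒᵖ := ⟨hss, isNilpotent_jacobson_mulOpposite hnil⟩
  have : IsArtinianRing Rᵐᵒᵖ := IsSemiprimaryRing.isNoetherian_iff_isArtinian.1 ‹_›
  have : IsSemisimpleRing (R ⧸ Ring.jacobson R) :=
    isSemisimpleRing_quotient_jacobson_of_mulOpposite hss
  exact hP.isNoetherianRing_and_baer
    fun _ _ ↦ h2.exists_eq_mul_of_isLeftKasch (hP.isLeftKasch hnil)

end RightNoetherian

section SelfInjective

variable {R : Type*} [Ring R]

theorem isLeft2Injective_of_baer (hB : Module.Baer R R) : IsLeft2Injective R := by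
  intro a b f
  obtain ⟨g, hg⟩ := hB _ f
  exact ⟨g, fun x ↦ hg x x.2⟩

theorem exists_mul_eq_self_and_mul_eq_zero (hB : Module.Baer R R) {C S : Ideal R}
    (h : C ⊓ S = ⊥) : ∃ t, (∀ c ∈ C, c * t = c) ∧ ∀ s ∈ S, s * t = 0 := by
  obtain ⟨t, ht⟩ := exists_eq_mul_of_ker_le_ker (g := C.subtype.coprod S.subtype)
    (h := C.subtype ∘ₗ LinearMap.fst R C S)
    (fun f ↦ (hB _ f).imp fun _ hg x ↦ hg x x.2) (by
      rintro ⟨c, s⟩ hcs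
      have hc : (c : R) = -s := eq_neg_of_add_eq_zero_left (by simpa using hcs)
      have hmem : (c : R) ∈ C ⊓ S := ⟨c.2, hc ▸ neg_mem s.2⟩
      simpa [h] using hmem)
  exact ⟨t, fun c hc ↦ by simpa using (ht (⟨c, hc⟩, 0)).symm,
    fun s hs ↦ by simpa using (ht (0, ⟨s, hs⟩)).symm⟩

theorem IsComplementLeftIdeal.exists_eq_span_singleton (hB : Module.Baer R R) {C : Ideal R}
    (hC : IsComplementLeftIdeal R C) : ∃ e, IsIdempotentElem e ∧ C = Ideal.span {e} := by
  obtain ⟨I, hCI⟩ := isComplementLeftIdeal_iff.1 hC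
  obtain ⟨S, hIS, hS⟩ := exists_maximal_inf_eq_bot (inf_comm I C ▸ hCI.prop)
  obtain ⟨t, htC, htS⟩ := exists_mul_eq_self_and_mul_eq_zero hB (inf_comm S C ▸ hS.prop)
  -- `{r | r * t ∈ S}` contains `S` and meets `C` trivially, so it is `S` by maximality.
  have hcomap : Submodule.comap (LinearMap.toSpanSingleton R R t) S ≤ S := by
    refine hS.le_of_ge ((Submodule.eq_bot_iff _).2 ?_) fun s hs ↦ by simp [htS s hs]
    rintro c ⟨hcS, hcC⟩
    have hc : c ∈ S := by simpa [htC c hcC] using hcS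
    exact (Submodule.eq_bot_iff _).1 hS.prop c ⟨hc, hcC⟩
  have hle : C ≤ Ideal.span {t} := fun c hc ↦ Ideal.mem_span_singleton'.2 ⟨c, htC c hc⟩
  have hspan : C = Ideal.span {t} := by
    refine hle.antisymm (hCI.le_of_ge ((Submodule.eq_bot_iff _).2 ?_) hle)
    rintro x ⟨hxt, hxI⟩
    obtain ⟨r, rfl⟩ := Ideal.mem_span_singleton'.1 hxt
    exact htS r (hcomap (hIS hxI))
  exact ⟨t, htC t (hspan ▸ Ideal.mem_span_singleton_self t), hspan⟩

theorem IsComplementLeftIdeal.not_isSmallLeftIdeal (hB : Module.Baer R R) {C : Ideal R}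
    (hC : IsComplementLeftIdeal R C) (hC0 : C ≠ ⊥) : ¬ IsSmallLeftIdeal R C := by
  obtain ⟨e, he, rfl⟩ := hC.exists_eq_span_singleton hB
  exact not_isSmallLeftIdeal_of_isCompl (isCompl_span_singleton_one_sub he) hC0

theorem exists_notMem_jacobson_mul_mul_eq_self_of_baer (hB : Module.Baer R R) {a : R}
    (ha : a ∉ Ring.jacobson R) : ∃ d ∉ Ring.jacobson R, ∃ s, s * a * d = d := by
  obtain ⟨D, hD, hD0, hDa⟩ :=
    (isLeft2Injective_of_baer hB).isLeftPInjective.exists_isComplementLeftIdeal ha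
  obtain ⟨e, he, rfl⟩ := hD.exists_eq_span_singleton hB
  obtain ⟨s, hs⟩ := hDa e (Ideal.mem_span_singleton_self e)
  have hse : e * a * (s * e) = e := by rw [← mul_assoc, hs, he.eq]
  refine ⟨s * e, fun hmem ↦ hD.not_isSmallLeftIdeal hB hD0 (isSmallLeftIdeal_of_le_jacobson ?_),
    s * e, by rw [mul_assoc, mul_assoc, ← mul_assoc e, hse]⟩
  rw [Ideal.span_singleton_le_iff_mem, ← hse]
  exact Ideal.mul_mem_left _ _ hmem

theorem isNoetherianRing_mulOpposite_of_baer [IsNoetherianRing R] (hB : Module.Baer R R) :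
    IsNoetherianRing Rᵐᵒᵖ := by
  have hP := (isLeft2Injective_of_baer hB).isLeftPInjective
  have hss : IsSemisimpleRing (R ⧸ Ring.jacobson R) :=
    isSemisimpleRing_quotient_jacobson fun _ ↦ exists_notMem_jacobson_mul_mul_eq_self_of_baer hB
  have hnil : IsNilpotent (Ring.jacobson R) :=
    isNilpotent_of_subset_lSingular fun _ ↦ hP.mem_lSingular_iff.2
  have : IsSemiprimaryRing R := ⟨hss, hnil⟩
  have : IsArtinianRing R := IsSemiprimaryRing.isNoetherian_iff_isArtinian.1 ‹_›
  exact hP.isNoetherianRing_mulOpposite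

end SelfInjective

/-- `R` is QF iff `R` is right noetherian, left 2-injective and every nonzero
complement left ideal is not small. -/
theorem stmt7 (R : Type*) [Ring R] :
    IsQuasiFrobenius R ↔
      (IsNoetherianRing Rᵐᵒᵖ ∧ IsLeft2Injective R ∧
        ∀ C : Ideal R, IsComplementLeftIdeal R C → C ≠ ⊥ → ¬ IsSmallLeftIdeal R C) := by
  constructor
  · rintro ⟨_, hinj⟩
    have hB := Module.Baer.of_injective hinj
    exact ⟨isNoetherianRing_mulOpposite_of_baer hB, isLeft2Injective_of_baer hB,
      fun _ hC ↦ hC.not_isSmallLeftIdeal hB⟩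
  · rintro ⟨_, h2, hC⟩
    obtain ⟨hnoeth, hB⟩ := isNoetherianRing_and_baer_of_isLeft2Injective h2 hC
    exact ⟨hnoeth, hB.injective⟩
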